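/- arXiv:2506.09044 — 2 statements merged into one kernel-verified Lean document; each statement's English description precedes it below -/
import Mathlib

section
/- Let Θ and Z be real normed vector spaces (Z carrying a measurable-space structure), let Z₀ be a measurable space, and let D₀ be a probability measure on Z₀. Let ℓ : Z × Θ → ℝ be jointly convex, let φ : Z₀ × Θ → Z be affine in its second argument for each fixed z₀, and assume that for every (θ_M, θ_D) the function z₀ ↦ ℓ(φ(z₀, θ_D), θ_M) is D₀-integrable. Define DR(θ_M, θ_D) = ∫ ℓ(φ(z₀, θ_D), θ_M) dD₀(z₀). Then every local minimum of DR on Θ × Θ is a global minimum: if (θ_M⁰, θ_D⁰) is a local minimizer of DR (with respect to the product norm topology), then DR(θ_M⁰, θ_D⁰) ≤ DR(θ_M, θ_D) for all (θ_M, θ_D) ∈ Θ × Θ. -/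
open MeasureTheory

section ConvexCombinations

variable {𝕜 E F G β : Type*} [Ring 𝕜] [PartialOrder 𝕜]
  [AddCommMonoid E] [SMul 𝕜 E] [AddCommMonoid F] [SMul 𝕜 F] [AddCommMonoid G] [SMul 𝕜 G]
  [AddCommMonoid β] [PartialOrder β] [SMul 𝕜 β]

theorem convexOn_univ_iff_one_sub [IsOrderedAddMonoid 𝕜] {f : E → β} :
    ConvexOn 𝕜 Set.univ f ↔ ∀ (x y : E) (t : 𝕜), 0 ≤ t → t ≤ 1 →
      f (t • x + (1 - t) • y) ≤ t • f x + (1 - t) • f y := by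
  constructor
  · intro hf x y t ht₀ ht₁
    exact hf.2 (Set.mem_univ x) (Set.mem_univ y) ht₀ (sub_nonneg.2 ht₁) (add_sub_cancel t 1)
  · refine fun hf ↦ ⟨convex_univ, fun x _ y _ a b ha hb hab ↦ ?_⟩
    obtain rfl : b = 1 - a := eq_sub_of_add_eq' hab
    exact hf x y a ha (sub_nonneg.1 hb)

variable (𝕜) in
/-- Affinity of an unbundled map, as compatibility with convex combinations of two points. Only
weights in `[0, 1]` are tested, in contrast with an `AffineMap`. -/
def PreservesConvexCombinations (f : E → F) : Prop :=
  ∀ (x y : E) (t : 𝕜), 0 ≤ t → t ≤ 1 → f (t • x + (1 - t) • y) = t • f x + (1 - t) • f y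

theorem PreservesConvexCombinations.convexOn_univ_comp_snd [IsOrderedAddMonoid 𝕜]
    {f : E → F} {g : F → G → β} (hf : PreservesConvexCombinations 𝕜 f)
    (hg : ConvexOn 𝕜 Set.univ (Function.uncurry g)) :
    ConvexOn 𝕜 Set.univ (fun p : G × E ↦ g (f p.2) p.1) := by
  rw [convexOn_univ_iff_one_sub] at hg ⊢
  intro p q t ht₀ ht₁
  calc g (f (t • p.2 + (1 - t) • q.2)) (t • p.1 + (1 - t) • q.1)
      = g (t • f p.2 + (1 - t) • f q.2) (t • p.1 + (1 - t) • q.1) := by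
        rw [hf p.2 q.2 t ht₀ ht₁]
    _ ≤ t • g (f p.2) p.1 + (1 - t) • g (f q.2) q.1 :=
        hg (f p.2, p.1) (f q.2, q.1) t ht₀ ht₁

end ConvexCombinations

section DecoupledRisk

variable {ΘM ΘD Z Z₀ : Type*} [MeasurableSpace Z₀]

/-- The decoupled performative risk of a pair (model parameter, distribution parameter), written
as an integral against the base measure `μ` rather than against its push-forward under
`z₀ ↦ φ z₀ θD`, so that `Z` needs no σ-algebra. -/
noncomputable def decoupledRisk (μ : Measure Z₀) (ℓ : Z → ΘM → ℝ) (φ : Z₀ → ΘD → Z)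
    (p : ΘM × ΘD) : ℝ :=
  ∫ z₀, ℓ (φ z₀ p.2) p.1 ∂μ

variable [AddCommGroup ΘM] [Module ℝ ΘM] [AddCommGroup ΘD] [Module ℝ ΘD] [AddCommGroup Z]
  [Module ℝ Z] {μ : Measure Z₀} {ℓ : Z → ΘM → ℝ} {φ : Z₀ → ΘD → Z}

theorem convexOn_univ_decoupledRisk (hℓ : ConvexOn ℝ Set.univ (Function.uncurry ℓ))
    (hφ : ∀ᵐ z₀ ∂μ, PreservesConvexCombinations ℝ (φ z₀))
    (hint : ∀ θM θD, Integrable (fun z₀ ↦ ℓ (φ z₀ θD) θM) μ) :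
    ConvexOn ℝ Set.univ (decoupledRisk μ ℓ φ) :=
  integral_convexOn_of_integrand_ae convex_univ
    (hφ.mono fun _ h ↦ h.convexOn_univ_comp_snd hℓ) fun p _ ↦ hint p.1 p.2

theorem decoupled_risk_local_min_is_global_general
    [TopologicalSpace ΘM] [IsTopologicalAddGroup ΘM] [ContinuousSMul ℝ ΘM]
    [TopologicalSpace ΘD] [IsTopologicalAddGroup ΘD] [ContinuousSMul ℝ ΘD]
    (hℓ : ConvexOn ℝ Set.univ (Function.uncurry ℓ))
    (hφ : ∀ᵐ z₀ ∂μ, PreservesConvexCombinations ℝ (φ z₀))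
    (hint : ∀ θM θD, Integrable (fun z₀ ↦ ℓ (φ z₀ θD) θM) μ)
    {p₀ : ΘM × ΘD} (hloc : IsLocalMin (decoupledRisk μ ℓ φ) p₀) (p : ΘM × ΘD) :
    decoupledRisk μ ℓ φ p₀ ≤ decoupledRisk μ ℓ φ p :=
  IsMinOn.of_isLocalMin_of_convex_univ hloc (convexOn_univ_decoupledRisk hℓ hφ hint) p

end DecoupledRisk

/-- Under joint convexity of the loss and affinity of the push-forward map in
the parameter, every local minimum of the decoupled performative risk
`DR (θM, θD) = ∫ ℓ (φ z₀ θD) θM ∂D₀` (with respect to the product norm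
topology on `Θ × Θ`) is a global minimum. -/
theorem decoupled_risk_local_min_is_global
    {Θ Z Z₀ : Type*} [NormedAddCommGroup Θ] [NormedSpace ℝ Θ]
    [NormedAddCommGroup Z] [NormedSpace ℝ Z] [MeasurableSpace Z]
    [MeasurableSpace Z₀]
    (D₀ : Measure Z₀) [IsProbabilityMeasure D₀]
    (ℓ : Z → Θ → ℝ) (φ : Z₀ → Θ → Z)
    (hℓ : ∀ (z z' : Z) (θ θ' : Θ) (t : ℝ), 0 ≤ t → t ≤ 1 →
      ℓ (t • z + (1 - t) • z') (t • θ + (1 - t) • θ')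
        ≤ t * ℓ z θ + (1 - t) * ℓ z' θ')
    (hφ : ∀ (z₀ : Z₀) (θ θ' : Θ) (t : ℝ), 0 ≤ t → t ≤ 1 →
      φ z₀ (t • θ + (1 - t) • θ') = t • φ z₀ θ + (1 - t) • φ z₀ θ')
    (hint : ∀ (θM θD : Θ), Integrable (fun z₀ => ℓ (φ z₀ θD) θM) D₀)
    (θM₀ θD₀ : Θ)
    (hloc : IsLocalMin (fun p : Θ × Θ => ∫ z₀, ℓ (φ z₀ p.2) p.1 ∂D₀) (θM₀, θD₀)) :
    ∀ (θM θD : Θ),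
      (∫ z₀, ℓ (φ z₀ θD₀) θM₀ ∂D₀) ≤ ∫ z₀, ℓ (φ z₀ θD) θM ∂D₀ := by
  have hℓ_convex : ConvexOn ℝ Set.univ (Function.uncurry ℓ) :=
    convexOn_univ_iff_one_sub.2 fun p q ↦ hℓ p.1 q.1 p.2 q.2
  exact fun θM θD ↦ decoupled_risk_local_min_is_global_general hℓ_convex (ae_of_all D₀ hφ) hint
    hloc (θM, θD)
end

section
/- Let Θ and Z be finite-dimensional real inner product spaces, Z₀ a measurable space, D₀ a probability measure on Z₀, and γ > 0. Let ℓ : Z × Θ → ℝ be Fréchet differentiable with gradients ∇_zℓ and ∇_θℓ, and γ-strongly jointly convex: for all (z, θ), (z', θ'), ℓ(z', θ') − ℓ(z, θ) ≥ ⟨∇_zℓ(z, θ), z' − z⟩ + ⟨∇_θℓ(z, θ), θ' − θ⟩ + (γ/2)(‖z' − z‖² + ‖θ' − θ‖²). Let φ(z₀, θ) = ψ(z₀) + g(z₀)(θ) with ψ : Z₀ → Z and g(z₀) : Θ → Z a continuous linear map for each z₀, satisfying ‖g(z₀)(v)‖ = ‖g(z₀)‖·‖v‖ for all v ∈ Θ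 (where ‖g(z₀)‖ is the operator norm). Assume z₀ ↦ ‖g(z₀)‖² is D₀-integrable, and that for all (θ_M, θ_D) the functions z₀ ↦ ℓ(φ(z₀, θ_D), θ_M), z₀ ↦ ∇_θℓ(φ(z₀, θ_D), θ_M), and z₀ ↦ g(z₀)*(∇_zℓ(φ(z₀, θ_D), θ_M)) (where g(z₀)* is the adjoint) are D₀-integrable. Set λ = min(1, ∫ ‖g(z₀)‖² dD₀(z₀)), DR(θ_M, θ_D) = ∫ ℓ(φ(z₀, θ_D), θ_M) dD₀(z₀), G_M(θ_M, θ_D) = ∫ ∇_θℓ(φ(z₀, θ_D), θ_M) dD₀(z₀), and G_D(θ_M, θ_D) = ∫ g(z₀)*(∇_zℓ(φ(z₀, θ_D), θ_M)) dD₀(z₀). Then for all (θ_M, θ_D), (θ_M', θ_D'): DR(θ_M', θ_D') − DR(θ_M, θ_D) ≥ ⟨G_M(θ_M, θ_D), θ_M' − θ_M⟩ + ⟨G_D(θ_M, θ_D), θ_D' − θ_D⟩ + (λγ/2)(‖θ_M' − θ_M‖² + ‖θ_D' − θ_D‖²), i.e. DR is (λγ)-strongly jointly convex. -/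
open MeasureTheory
open scoped RealInnerProductSpace

/-!
First-order strong convexity inequalities, with a separate modulus for each variable, are stable
under affine substitution (the adjoint carries the gradient over) and under integration of both
sides. If `κ z₀ * ‖v‖ ^ 2 ≤ ‖g z₀ v‖ ^ 2`, substituting `ψ z₀ + g z₀ θ` multiplies the modulus by
`κ z₀`; after integrating over `z₀` the two moduli are `γ` and `γ * ∫ κ`, and the smaller one serves
for both variables. The norm equality for `g z₀` makes `κ z₀ = ‖g z₀‖ ^ 2` admissible.
-/

/-- Strong joint convexity of `f x y`, in first-order form, with respect to given partial gradients
`gx` and `gy`. The moduli `α` in `x` and `β` in `y` are kept separate because substituting in one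
variable rescales only its own modulus. -/
def StronglyJointlyConvexWith {X Y : Type*}
    [NormedAddCommGroup X] [InnerProductSpace ℝ X] [NormedAddCommGroup Y] [InnerProductSpace ℝ Y]
    (α β : ℝ) (f : X → Y → ℝ) (gx : X → Y → X) (gy : X → Y → Y) : Prop :=
  ∀ (x x' : X) (y y' : Y),
    ⟪gx x y, x' - x⟫ + ⟪gy x y, y' - y⟫ + (α / 2 * ‖x' - x‖ ^ 2 + β / 2 * ‖y' - y‖ ^ 2)
      ≤ f x' y' - f x y

namespace StronglyJointlyConvexWith

variable {X Y : Type*}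
  [NormedAddCommGroup X] [InnerProductSpace ℝ X] [NormedAddCommGroup Y] [InnerProductSpace ℝ Y]
  {α β : ℝ}

theorem self_iff {f : X → Y → ℝ} {gx : X → Y → X} {gy : X → Y → Y} :
    StronglyJointlyConvexWith α α f gx gy ↔
      ∀ (x x' : X) (y y' : Y), f x' y' - f x y ≥
        ⟪gx x y, x' - x⟫ + ⟪gy x y, y' - y⟫ + α / 2 * (‖x' - x‖ ^ 2 + ‖y' - y‖ ^ 2) := by
  simp only [StronglyJointlyConvexWith, mul_add, ge_iff_le]

theorem swap {f : X → Y → ℝ} {gx : X → Y → X} {gy : X → Y → Y}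
    (hf : StronglyJointlyConvexWith α β f gx gy) :
    StronglyJointlyConvexWith β α
      (fun y x => f x y) (fun y x => gy x y) (fun y x => gx x y) := by
  intro y y' x x'
  linarith [hf x x' y y']

theorem mono {f : X → Y → ℝ} {gx : X → Y → X} {gy : X → Y → Y} {α' β' : ℝ}
    (hf : StronglyJointlyConvexWith α β f gx gy) (hα : α' ≤ α) (hβ : β' ≤ β) :
    StronglyJointlyConvexWith α' β' f gx gy := by
  intro x x' y y'
  refine le_trans ?_ (hf x x' y y')
  gcongr

theorem comp_affine_left {W : Type*} [NormedAddCommGroup W] [InnerProductSpace ℝ W]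
    [CompleteSpace W] [CompleteSpace X] {f : X → Y → ℝ} {gx : X → Y → X} {gy : X → Y → Y}
    (hf : StronglyJointlyConvexWith α β f gx gy) (hα : 0 ≤ α) (c : X) (A : W →L[ℝ] X) {κ : ℝ}
    (hA : ∀ w, κ * ‖w‖ ^ 2 ≤ ‖A w‖ ^ 2) :
    StronglyJointlyConvexWith (α * κ) β (fun w y => f (c + A w) y)
      (fun w y => ContinuousLinearMap.adjoint A (gx (c + A w) y))
      (fun w y => gy (c + A w) y) := by
  intro w w' y y'
  have increment : c + A w' - (c + A w) = A (w' - w) := by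
    rw [add_sub_add_left_eq_sub, map_sub]
  have modulus : α * κ / 2 * ‖w' - w‖ ^ 2 ≤ α / 2 * ‖A (w' - w)‖ ^ 2 := by
    calc α * κ / 2 * ‖w' - w‖ ^ 2 = α / 2 * (κ * ‖w' - w‖ ^ 2) := by ring
      _ ≤ α / 2 * ‖A (w' - w)‖ ^ 2 := by gcongr; exact hA _
  have convexity := hf (c + A w) (c + A w') y y'
  rw [increment] at convexity
  rw [ContinuousLinearMap.adjoint_inner_left]
  linarith

theorem integral {Ω : Type*} [MeasurableSpace Ω] {μ : Measure Ω}
    [CompleteSpace X] [CompleteSpace Y] {a b : Ω → ℝ}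
    {f : Ω → X → Y → ℝ} {gx : Ω → X → Y → X} {gy : Ω → X → Y → Y}
    (hf : ∀ᵐ ω ∂μ, StronglyJointlyConvexWith (a ω) (b ω) (f ω) (gx ω) (gy ω))
    (ha : Integrable a μ) (hb : Integrable b μ)
    (hf_int : ∀ x y, Integrable (fun ω => f ω x y) μ)
    (hgx_int : ∀ x y, Integrable (fun ω => gx ω x y) μ)
    (hgy_int : ∀ x y, Integrable (fun ω => gy ω x y) μ) :
    StronglyJointlyConvexWith (∫ ω, a ω ∂μ) (∫ ω, b ω ∂μ) (fun x y => ∫ ω, f ω x y ∂μ)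
      (fun x y => ∫ ω, gx ω x y ∂μ) (fun x y => ∫ ω, gy ω x y ∂μ) := by
  intro x x' y y'
  have hx := (hgx_int x y).inner_const (𝕜 := ℝ) (x' - x)
  have hy := (hgy_int x y).inner_const (𝕜 := ℝ) (y' - y)
  have ha' := (ha.div_const 2).mul_const (‖x' - x‖ ^ 2)
  have hb' := (hb.div_const 2).mul_const (‖y' - y‖ ^ 2)
  calc ⟪∫ ω, gx ω x y ∂μ, x' - x⟫ + ⟪∫ ω, gy ω x y ∂μ, y' - y⟫
        + ((∫ ω, a ω ∂μ) / 2 * ‖x' - x‖ ^ 2 + (∫ ω, b ω ∂μ) / 2 * ‖y' - y‖ ^ 2)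
      = ∫ ω, (⟪gx ω x y, x' - x⟫ + ⟪gy ω x y, y' - y⟫
          + (a ω / 2 * ‖x' - x‖ ^ 2 + b ω / 2 * ‖y' - y‖ ^ 2)) ∂μ := by
        rw [integral_add (hx.fun_add hy) (ha'.fun_add hb'), integral_add hx hy,
          integral_add ha' hb', integral_mul_const, integral_mul_const, integral_div, integral_div]
        simp only [real_inner_comm (x' - x), real_inner_comm (y' - y),
          integral_inner (hgx_int x y), integral_inner (hgy_int x y)]
    _ ≤ ∫ ω, (f ω x' y' - f ω x y) ∂μ :=
        integral_mono_ae ((hx.add hy).add (ha'.add hb')) ((hf_int x' y').sub (hf_int x y))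
          (hf.mono fun _ hω => hω x x' y y')
    _ = (∫ ω, f ω x' y' ∂μ) - ∫ ω, f ω x y ∂μ := integral_sub (hf_int x' y') (hf_int x y)

end StronglyJointlyConvexWith

theorem decoupled_risk_strongly_jointly_convex_general {Θ Z Z₀ : Type*}
    [NormedAddCommGroup Θ] [InnerProductSpace ℝ Θ] [CompleteSpace Θ]
    [NormedAddCommGroup Z] [InnerProductSpace ℝ Z] [CompleteSpace Z]
    [MeasurableSpace Z₀] (D₀ : Measure Z₀) [IsFiniteMeasure D₀] {γ : ℝ} (hγ : 0 ≤ γ)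
    {ℓ : Z → Θ → ℝ} {gz : Z → Θ → Z} {gθ : Z → Θ → Θ}
    (hgrad : ∀ (z : Z) (θ : Θ),
      HasGradientAt (fun z' : Z => ℓ z' θ) (gz z θ) z ∧
      HasGradientAt (fun θ' : Θ => ℓ z θ') (gθ z θ) θ)
    (hℓ : StronglyJointlyConvexWith γ γ ℓ gz gθ)
    {ψ : Z₀ → Z} {g : Z₀ → Θ →L[ℝ] Z} {φ : Z₀ → Θ → Z} (hφ : ∀ z₀ θ, φ z₀ θ = ψ z₀ + g z₀ θ)
    {κ : Z₀ → ℝ} (hκ : ∀ z₀ v, κ z₀ * ‖v‖ ^ 2 ≤ ‖g z₀ v‖ ^ 2) (hκ_int : Integrable κ D₀)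
    (hℓ_int : ∀ θM θD, Integrable (fun z₀ => ℓ (φ z₀ θD) θM) D₀)
    (hgθ_int : ∀ θM θD, Integrable (fun z₀ => gθ (φ z₀ θD) θM) D₀)
    (hgz_int : ∀ θM θD, Integrable
      (fun z₀ => ContinuousLinearMap.adjoint (g z₀) (gz (φ z₀ θD) θM)) D₀) :
    StronglyJointlyConvexWith
      (min (D₀.real Set.univ) (∫ z₀, κ z₀ ∂D₀) * γ) (min (D₀.real Set.univ) (∫ z₀, κ z₀ ∂D₀) * γ)
      (fun θM θD => ∫ z₀, ℓ (φ z₀ θD) θM ∂D₀)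
      (fun θM θD => ∫ z₀, gθ (φ z₀ θD) θM ∂D₀)
      (fun θM θD => ∫ z₀, ContinuousLinearMap.adjoint (g z₀) (gz (φ z₀ θD) θM) ∂D₀) := by
  have pointwise (z₀ : Z₀) : StronglyJointlyConvexWith γ (γ * κ z₀)
      (fun θM θD => ℓ (φ z₀ θD) θM) (fun θM θD => gθ (φ z₀ θD) θM)
      (fun θM θD => ContinuousLinearMap.adjoint (g z₀) (gz (φ z₀ θD) θM)) := by
    simpa only [hφ] using (hℓ.comp_affine_left hγ (ψ z₀) (g z₀) (hκ z₀)).swap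
  refine (StronglyJointlyConvexWith.integral (.of_forall pointwise) (integrable_const γ)
    (hκ_int.const_mul γ) hℓ_int hgθ_int hgz_int).mono ?_ ?_
  · rw [integral_const, smul_eq_mul]
    exact mul_le_mul_of_nonneg_right (min_le_left _ _) hγ
  · rw [integral_const_mul, mul_comm γ]
    exact mul_le_mul_of_nonneg_right (min_le_right _ _) hγ

/-- If the loss `ℓ` is `γ`-strongly jointly convex with (partial) gradients
`gz`, `gθ`, and the push-forward map is `φ z₀ θ = ψ z₀ + g z₀ θ` with
`g z₀` a continuous linear map satisfying `‖g z₀ v‖ = ‖g z₀‖ * ‖v‖`, then the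
decoupled performative risk `DR (θM, θD) = ∫ ℓ (φ z₀ θD) θM ∂D₀` is
`(λ * γ)`-strongly jointly convex with
`λ = min 1 (∫ ‖g z₀‖² ∂D₀)`, where the partial gradients of `DR` are
`G_M (θM, θD) = ∫ gθ (φ z₀ θD) θM ∂D₀` and
`G_D (θM, θD) = ∫ (g z₀)† (gz (φ z₀ θD) θM) ∂D₀`. -/
theorem decoupled_risk_strongly_jointly_convex
    {Θ Z Z₀ : Type*}
    [NormedAddCommGroup Θ] [InnerProductSpace ℝ Θ] [FiniteDimensional ℝ Θ]
    [NormedAddCommGroup Z] [InnerProductSpace ℝ Z] [FiniteDimensional ℝ Z]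
    [MeasurableSpace Z₀]
    (D₀ : Measure Z₀) [IsProbabilityMeasure D₀]
    (γ : ℝ) (hγ : 0 < γ)
    (ℓ : Z → Θ → ℝ) (gz : Z → Θ → Z) (gθ : Z → Θ → Θ)
    (hgrad : ∀ (z : Z) (θ : Θ),
      HasGradientAt (fun z' : Z => ℓ z' θ) (gz z θ) z ∧
      HasGradientAt (fun θ' : Θ => ℓ z θ') (gθ z θ) θ)
    (hsc : ∀ (z z' : Z) (θ θ' : Θ),
      ℓ z' θ' - ℓ z θ ≥
        ⟪gz z θ, z' - z⟫ + ⟪gθ z θ, θ' - θ⟫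
          + γ / 2 * (‖z' - z‖ ^ 2 + ‖θ' - θ‖ ^ 2))
    (ψ : Z₀ → Z) (g : Z₀ → Θ →L[ℝ] Z)
    (φ : Z₀ → Θ → Z) (hφ : ∀ (z₀ : Z₀) (θ : Θ), φ z₀ θ = ψ z₀ + g z₀ θ)
    (hgnorm : ∀ (z₀ : Z₀) (v : Θ), ‖g z₀ v‖ = ‖g z₀‖ * ‖v‖)
    (hg2int : Integrable (fun z₀ => ‖g z₀‖ ^ 2) D₀)
    (hint : ∀ (θM θD : Θ), Integrable (fun z₀ => ℓ (φ z₀ θD) θM) D₀)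
    (hintθ : ∀ (θM θD : Θ), Integrable (fun z₀ => gθ (φ z₀ θD) θM) D₀)
    (hintz : ∀ (θM θD : Θ),
      Integrable
        (fun z₀ => ContinuousLinearMap.adjoint (g z₀) (gz (φ z₀ θD) θM)) D₀)
    (lam : ℝ) (hlam : lam = min 1 (∫ z₀, ‖g z₀‖ ^ 2 ∂D₀))
    (DR : Θ → Θ → ℝ)
    (hDR : ∀ (θM θD : Θ), DR θM θD = ∫ z₀, ℓ (φ z₀ θD) θM ∂D₀)
    (GM GD : Θ → Θ → Θ)
    (hGM : ∀ (θM θD : Θ), GM θM θD = ∫ z₀, gθ (φ z₀ θD) θM ∂D₀)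
    (hGD : ∀ (θM θD : Θ), GD θM θD =
      ∫ z₀, ContinuousLinearMap.adjoint (g z₀) (gz (φ z₀ θD) θM) ∂D₀) :
    ∀ (θM θD θM' θD' : Θ),
      DR θM' θD' - DR θM θD ≥
        ⟪GM θM θD, θM' - θM⟫ + ⟪GD θM θD, θD' - θD⟫
          + lam * γ / 2 * (‖θM' - θM‖ ^ 2 + ‖θD' - θD‖ ^ 2) := by
  have hDR_convex := decoupled_risk_strongly_jointly_convex_general D₀ hγ.le hgrad
    (.self_iff.2 hsc) hφ (fun z₀ v => by rw [hgnorm, mul_pow]) hg2int hint hintθ hintz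
  simp only [probReal_univ, ← hlam, ← hDR, ← hGM, ← hGD] at hDR_convex
  exact fun θM θD θM' θD' => StronglyJointlyConvexWith.self_iff.1 hDR_convex θM θM' θD θD'
end
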